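/- Let F be a Ferrers diagram of semiperimeter n+1, T ∈ EWtab(F), and c̃ = φ_TC(T). Let a = (a_1,…,a_n) ∈ ℕ^n and set c = c̃ + a (componentwise). Then c is a recurrent configuration on G(F) with CanonTop(c) = CanonTop(c̃) if and only if a_j < ν_j(T) for every j ∈ {1,…,n}. -/

import Mathlib

open Classical

/-- A Ferrers diagram of semiperimeter `n + 1`, encoded by the set of its row labels
(labels `0, …, n` run along the south-east border; `0` labels the top row and the
last label `n` is a column label). -/
structure Ferrers (n : ℕ) where
  rows : Finset (Fin (n + 1))
  zero_mem : 0 ∈ rows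
  last_not_mem : Fin.last n ∉ rows

namespace Ferrers

/-- `(i, j)` is a cell of the diagram: `i` is a row label, `j` a column label, `i < j`. -/
def Cell {n : ℕ} (F : Ferrers n) (i j : Fin (n + 1)) : Prop :=
  i ∈ F.rows ∧ j ∉ F.rows ∧ i < j

/-- Adjacency in the Ferrers graph `G(F)`. -/
def Adj {n : ℕ} (F : Ferrers n) (u v : Fin (n + 1)) : Prop :=
  F.Cell u v ∨ F.Cell v u

/-- Degree of a vertex in `G(F)`. -/
noncomputable def deg {n : ℕ} (F : Ferrers n) (v : Fin (n + 1)) : ℕ :=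
  {u | F.Adj v u}.ncard

/-- Toppling a single vertex.  The height at the sink `0` is kept equal to `c 0`
(grains sent to the sink vanish); toppling the sink sends one grain to each of
its neighbours. -/
noncomputable def topple {n : ℕ} (F : Ferrers n) (c : Fin (n + 1) → ℕ)
    (v : Fin (n + 1)) : Fin (n + 1) → ℕ :=
  fun u =>
    if u = 0 then c 0
    else if u = v then c v - F.deg v
    else if F.Adj v u then c u + 1
    else c u

/-- Toppling the vertices of a list in order. -/
noncomputable def toppleList {n : ℕ} (F : Ferrers n) (c : Fin (n + 1) → ℕ)
    (l : List (Fin (n + 1))) : Fin (n + 1) → ℕ :=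
  l.foldl F.topple c

/-- Simultaneous toppling of a set of vertices. -/
noncomputable def toppleSet {n : ℕ} (F : Ferrers n) (c : Fin (n + 1) → ℕ)
    (S : Set (Fin (n + 1))) : Fin (n + 1) → ℕ :=
  fun u =>
    if u = 0 then c 0
    else c u + {w ∈ S | F.Adj w u}.ncard - if u ∈ S then F.deg u else 0

/-- A configuration is stable if every non-sink vertex has fewer grains than its degree. -/
def Stable {n : ℕ} (F : Ferrers n) (c : Fin (n + 1) → ℕ) : Prop :=
  ∀ v, v ≠ 0 → c v < F.deg v

/-- A Dhar (burning) ordering for `c`: an ordering `v₀ = 0, v₁, …, vₙ` of all the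
vertices such that each `vᵢ` (`i ≥ 1`) is unstable after toppling `v₀, …, v_{i-1}`. -/
def DharSeq {n : ℕ} (F : Ferrers n) (c : Fin (n + 1) → ℕ) (l : List (Fin (n + 1))) : Prop :=
  l.length = n + 1 ∧ l.Nodup ∧ l.head? = some 0 ∧
    ∀ i, ∀ h : i < l.length, 1 ≤ i →
      F.deg (l.get ⟨i, h⟩) ≤ F.toppleList c (l.take i) (l.get ⟨i, h⟩)

/-- Recurrent configurations (via Dhar's criterion).  The height at the sink is
normalised to `0`. -/
def Recurrent {n : ℕ} (F : Ferrers n) (c : Fin (n + 1) → ℕ) : Prop :=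
  c 0 = 0 ∧ F.Stable c ∧ ∃ l, F.DharSeq c l

/-- Minimal recurrent configurations: recurrent with minimal total number of grains. -/
def RecMin {n : ℕ} (F : Ferrers n) (c : Fin (n + 1) → ℕ) : Prop :=
  F.Recurrent c ∧ ∀ c', F.Recurrent c' → (∑ v, c v) ≤ ∑ v, c' v

/-- Canonical toppling: block `0` is `{0}` (the sink); from then on, blocks with odd
index are the sets of currently unstable column vertices and blocks with even index
the sets of currently unstable row vertices.  The first component is the configuration
just before toppling the block recorded in the second component. -/
noncomputable def canonAux {n : ℕ} (F : Ferrers n) (c : Fin (n + 1) → ℕ) :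
    ℕ → ((Fin (n + 1) → ℕ) × Set (Fin (n + 1)))
  | 0 => (c, {0})
  | k + 1 =>
    let c' := F.toppleSet (canonAux F c k).1 (canonAux F c k).2
    (c', {v | v ≠ 0 ∧ (if k % 2 = 0 then v ∉ F.rows else v ∈ F.rows) ∧ F.deg v ≤ c' v})

/-- The `k`-th block of the canonical toppling of `c`:
`canonTop F c 0 = U⁰ = {0}`, `canonTop F c (2i-1) = Vⁱ`, `canonTop F c (2i) = Uⁱ`. -/
noncomputable def canonTop {n : ℕ} (F : Ferrers n) (c : Fin (n + 1) → ℕ) (k : ℕ) :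
    Set (Fin (n + 1)) :=
  (F.canonAux c k).2

/-- The configuration just before toppling the `k`-th block of the canonical toppling. -/
noncomputable def canonConfig {n : ℕ} (F : Ferrers n) (c : Fin (n + 1) → ℕ) (k : ℕ) :
    Fin (n + 1) → ℕ :=
  (F.canonAux c k).1

/-- The index of the block of the canonical toppling of `c` containing `v`. -/
noncomputable def bIdx {n : ℕ} (F : Ferrers n) (c : Fin (n + 1) → ℕ) (v : Fin (n + 1)) : ℕ :=
  sInf {k | v ∈ F.canonTop c k}

/-- `T` is a EW-tableau on `F` (entries of non-cells are normalised to `false`):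
the top row contains only `1`s, every other row contains a `0`, and there is no
rectangle with two diagonally opposite `0`s and two `1`s in the other corners. -/
def IsEW {n : ℕ} (F : Ferrers n) (T : Fin (n + 1) → Fin (n + 1) → Bool) : Prop :=
  (∀ i j, ¬F.Cell i j → T i j = false) ∧
  (∀ j, F.Cell 0 j → T 0 j = true) ∧
  (∀ i, i ∈ F.rows → i ≠ 0 → ∃ j, F.Cell i j ∧ T i j = false) ∧
  (∀ i i' j j', F.Cell i j → F.Cell i j' → F.Cell i' j → F.Cell i' j' →
    T i j = T i' j' → T i j' = T i' j → T i j = T i j')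

/-- The configuration associated to a tableau: row vertices count the `1`s in their
row, column vertices count the `0`s in their column (the sink is normalised to `0`). -/
noncomputable def phiTC {n : ℕ} (F : Ferrers n) (T : Fin (n + 1) → Fin (n + 1) → Bool) :
    Fin (n + 1) → ℕ :=
  fun v =>
    if v = 0 then 0
    else if v ∈ F.rows then {j | F.Cell v j ∧ T v j = true}.ncard
    else {i | F.Cell i v ∧ T i v = false}.ncard

/-- The tableau associated to a (minimal recurrent) configuration: a cell `(i, j)`
gets a `1` exactly when `i` lies in an earlier block than `j` in the canonical
toppling of `c`. -/
noncomputable def phiCT {n : ℕ} (F : Ferrers n) (c : Fin (n + 1) → ℕ) :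
    Fin (n + 1) → Fin (n + 1) → Bool :=
  fun i j => if F.Cell i j ∧ F.bIdx c i < F.bIdx c j then true else false

/-- The supplementary tableau of `T`: `S i j = 1` exactly when the row vertex `i`
lies in an earlier block than the column vertex `j` in `CanonTop (φ_TC T)`. -/
noncomputable def suppS {n : ℕ} (F : Ferrers n) (T : Fin (n + 1) → Fin (n + 1) → Bool)
    (i j : Fin (n + 1)) : Bool :=
  if F.bIdx (F.phiTC T) i < F.bIdx (F.phiTC T) j then true else false

/-- The entry of `T` in cell `(j, k)` is a cornersupport entry. -/
def Cornersupport {n : ℕ} (F : Ferrers n) (T : Fin (n + 1) → Fin (n + 1) → Bool)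
    (j k : Fin (n + 1)) : Prop :=
  ∃ j' k', j' ∈ F.rows ∧ k' ∉ F.rows ∧ j' ≠ j ∧ k' ≠ k ∧
    F.suppS T j' k' = !(T j k) ∧ F.suppS T j' k = T j k ∧ F.suppS T j k' = T j k

/-- `ν_v(T)`: the number of non-cornersupport `0`s in row `v` (if `v` is a row label),
resp. non-cornersupport `1`s in column `v` (if `v` is a column label). -/
noncomputable def nu {n : ℕ} (F : Ferrers n) (T : Fin (n + 1) → Fin (n + 1) → Bool)
    (v : Fin (n + 1)) : ℕ :=
  if v ∈ F.rows then {k | F.Cell v k ∧ T v k = false ∧ ¬F.Cornersupport T v k}.ncard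
  else {i | F.Cell i v ∧ T i v = true ∧ ¬F.Cornersupport T i v}.ncard

/-- `μ_v(c)`: if `v ∈ Uⁱ`, the number of `k ∈ Vⁱ` with `k > v`; if `v ∈ Vⁱ`,
the number of `k ∈ U^{i-1}` with `k < v`.  In both cases the relevant block is the
one immediately preceding the block of `v`. -/
noncomputable def mu {n : ℕ} (F : Ferrers n) (c : Fin (n + 1) → ℕ) (v : Fin (n + 1)) : ℕ :=
  if v ∈ F.rows then {k | v < k ∧ k ∈ F.canonTop c (F.bIdx c v - 1)}.ncard
  else {k | k < v ∧ k ∈ F.canonTop c (F.bIdx c v - 1)}.ncard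

/-- The minimal recurrent configuration with the same canonical toppling as `c`:
if `j ∈ Uⁱ` then `minrec c j = |{ℓ ∈ Vᵏ : j < ℓ, k > i}|`, and if `j ∈ Vⁱ` then
`minrec c j = |{ℓ ∈ Uᵏ : ℓ < j, k ≥ i}|` (blocks `Vᵏ` sit at odd index `2k - 1`,
blocks `Uᵏ` at even index `2k`). -/
noncomputable def minrecFun {n : ℕ} (F : Ferrers n) (c : Fin (n + 1) → ℕ) :
    Fin (n + 1) → ℕ :=
  fun j =>
    if j = 0 then 0
    else if j ∈ F.rows then
      {l | j < l ∧ ∃ k, F.bIdx c j < 2 * k + 1 ∧ l ∈ F.canonTop c (2 * k + 1)}.ncard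
    else
      {l | l < j ∧ ∃ k, F.bIdx c j < 2 * k ∧ l ∈ F.canonTop c (2 * k)}.ncard

/-- The number of edges of `G(F)` (equivalently, the number of cells of `F`). -/
noncomputable def edgeCount {n : ℕ} (F : Ferrers n) : ℕ :=
  {p : Fin (n + 1) × Fin (n + 1) | F.Cell p.1 p.2}.ncard

end Ferrers

/-! The entries of an EW-tableau orient the Ferrers graph: across a `1` from row to column, across a
`0` from column to row. The forbidden rectangles make this orientation acyclic, the other two
conditions make the sink its only source, and `φ_TC T` records the out-degrees. Let `b v` be the
length of a longest path ending in `v`. A configuration `c` topples canonically along the levels of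
`b` exactly when each non-sink `v` first becomes unstable after level `b v - 1`, that is, when
`c v + #{u ∼ v | b u < b v - 1} < deg v ≤ c v + #{u ∼ v | b u < b v}`. For `c = φ_TC T + a` the
upper bound always holds and the lower one says that `a v` is less than the number of in-neighbours
of `v` one level below `v`. The arcs climbing more than one level are the cornersupport entries, so
this number is `ν_v(T)`. -/

/-- `b v` is the length of a longest `r`-path ending in `v`, expressed by the recursion which
determines this function: `b` increases along `r`, and each nonzero value is one more than the value
at some predecessor. -/
structure IsLongestPathLength {α : Type*} (r : α → α → Prop) (b : α → ℕ) : Prop where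
  lt : ∀ ⦃u v⦄, r u v → b u < b v
  exists_pred : ∀ ⦃v⦄, b v ≠ 0 → ∃ u, r u v ∧ b v = b u + 1

theorem exists_isLongestPathLength {α : Type*} [Finite α] {r : α → α → Prop}
    (hr : WellFounded r) : ∃ b, IsLongestPathLength r b := by
  cases nonempty_fintype α
  let b : α → ℕ := hr.fix fun v ih =>
    Finset.univ.sup fun u => if h : r u v then ih u h + 1 else 0
  have hb (v : α) : b v = Finset.univ.sup fun u => if r u v then b u + 1 else 0 := hr.fix_eq _ v
  refine ⟨b, fun u v h => ?_, fun v hv => ?_⟩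
  · calc b u < if r u v then b u + 1 else 0 := by simp [h]
      _ ≤ b v := hb v ▸ Finset.le_sup (f := fun u => if r u v then b u + 1 else 0)
          (Finset.mem_univ u)
  · obtain ⟨u, -, hu⟩ := Finset.exists_mem_eq_sup Finset.univ ⟨v, Finset.mem_univ v⟩
      fun u => if r u v then b u + 1 else 0
    rw [← hb v] at hu
    by_cases h : r u v
    · exact ⟨u, h, by simpa [h] using hu⟩
    · simp [h, hv] at hu

theorem ncard_le_countP {α : Type*} (l : List α) (p : α → Prop) :
    {u | u ∈ l ∧ p u}.ncard ≤ l.countP (p ·) := by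
  have hset : {u | u ∈ l ∧ p u} = ((l.filter (p ·)).toFinset : Set α) := by
    ext u
    simp
  rw [hset, Set.ncard_coe_finset, List.countP_eq_length_filter]
  exact List.toFinset_card_le _

theorem mem_take_ofFn_equiv_iff {α : Type*} {m : ℕ} (σ : Fin m ≃ α) (i : Fin m) (u : α) :
    u ∈ (List.ofFn σ).take i ↔ σ.symm u < i := by
  rw [List.mem_take_iff_getElem]
  constructor
  · rintro ⟨j, hj, rfl⟩
    simpa [Fin.lt_def] using (lt_min_iff.1 hj).1
  · intro h
    exact ⟨σ.symm u, by simpa using h, by simp⟩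

namespace Ferrers

variable {n : ℕ}

section Levels

variable {F : Ferrers n} {b : Fin (n + 1) → ℕ} {u v : Fin (n + 1)}

theorem Adj.symm (h : F.Adj u v) : F.Adj v u := Or.symm h

theorem Adj.mem_rows_iff (h : F.Adj u v) : u ∈ F.rows ↔ v ∉ F.rows := by
  rcases h with h | h
  · exact iff_of_true h.1 h.2.1
  · exact iff_of_false h.2.1 (not_not.2 h.1)

/-- The number of neighbours of `v` whose level, as given by `b`, is less than `k`. -/
noncomputable def degBelow (F : Ferrers n) (b : Fin (n + 1) → ℕ) (v : Fin (n + 1)) (k : ℕ) : ℕ :=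
  {u | F.Adj u v ∧ b u < k}.ncard

@[simp]
theorem degBelow_zero : F.degBelow b v 0 = 0 := by
  simp [degBelow]

theorem degBelow_succ (k : ℕ) :
    F.degBelow b v (k + 1) = F.degBelow b v k + {u | F.Adj u v ∧ b u = k}.ncard := by
  rw [degBelow, degBelow, ← Set.ncard_union_eq]
  · congr 1
    ext u
    simp only [Set.mem_ofPred_eq, Set.mem_union, ← and_or_left, Nat.lt_succ_iff_lt_or_eq]
  · exact Set.disjoint_left.2 fun u hlt heq => hlt.2.ne heq.2

theorem degBelow_mono : Monotone (F.degBelow b v) := fun _ _ h =>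
  Set.ncard_le_ncard fun _ hu => ⟨hu.1, hu.2.trans_le h⟩

theorem degBelow_le_deg (k : ℕ) : F.degBelow b v k ≤ F.deg v :=
  Set.ncard_le_ncard fun _ hu => hu.1.symm

/-- A possible assignment of block indices in a canonical toppling of all of `G(F)`: the sink alone
has level `0`, rows have even levels and columns odd ones. -/
structure IsLayering (F : Ferrers n) (b : Fin (n + 1) → ℕ) : Prop where
  even_iff : ∀ v, Even (b v) ↔ v ∈ F.rows
  eq_zero_iff : ∀ v, b v = 0 ↔ v = 0

theorem IsLayering.mod_two_ne (hb : F.IsLayering b) (h : F.Adj u v) : b u % 2 ≠ b v % 2 := by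
  have hrows := h.mem_rows_iff
  rw [← hb.even_iff, ← hb.even_iff, Nat.even_iff, Nat.even_iff] at hrows
  omega

theorem IsLayering.degBelow_pred (hb : F.IsLayering b) (v : Fin (n + 1)) :
    F.degBelow b v (b v - 1) = F.degBelow b v (b v - 2) := by
  unfold degBelow
  congr 1
  ext u
  refine and_congr_right fun hu => ?_
  have := hb.mod_two_ne hu
  omega

end Levels

section CanonicalToppling

variable {F : Ferrers n} {b c : Fin (n + 1) → ℕ} {v : Fin (n + 1)} {k : ℕ}

theorem canonConfig_succ :
    F.canonConfig c (k + 1) = F.toppleSet (F.canonConfig c k) (F.canonTop c k) := rfl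

theorem mem_canonTop_succ : v ∈ F.canonTop c (k + 1) ↔
    v ≠ 0 ∧ (if k % 2 = 0 then v ∉ F.rows else v ∈ F.rows) ∧
      F.deg v ≤ F.canonConfig c (k + 1) v := Iff.rfl

theorem IsLayering.mem_canonTop_succ (hb : F.IsLayering b) : v ∈ F.canonTop c (k + 1) ↔
    v ≠ 0 ∧ b v % 2 = (k + 1) % 2 ∧ F.deg v ≤ F.canonConfig c (k + 1) v := by
  rw [Ferrers.mem_canonTop_succ, ← hb.even_iff, Nat.even_iff]
  refine and_congr_right fun _ => and_congr_left fun _ => ?_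
  split_ifs <;> omega

theorem deg_le_canonConfig_of_mem_canonTop (hv : v ≠ 0) (h : v ∈ F.canonTop c k) :
    F.deg v ≤ F.canonConfig c k v := by
  cases k with
  | zero => exact absurd h hv
  | succ k => exact h.2.2

theorem canonConfig_add_ite (hv : v ≠ 0) (h : ∀ l < k, F.canonTop c l = {u | b u = l}) :
    F.canonConfig c k v + (if b v < k then F.deg v else 0) = c v + F.degBelow b v k := by
  induction k with
  | zero => simp [canonConfig, canonAux]
  | succ k ih =>
    have htop := h k k.lt_succ_self
    have ih := ih fun l hl => h l (hl.trans k.lt_succ_self)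
    have hreceived : {w | w ∈ F.canonTop c k ∧ F.Adj w v} = {u | F.Adj u v ∧ b u = k} := by
      ext u
      rw [htop]
      exact and_comm
    have hmem : v ∈ F.canonTop c k ↔ b v = k := by rw [htop]; rfl
    rw [canonConfig_succ, toppleSet, if_neg hv, hreceived, degBelow_succ]
    by_cases hbv : b v = k
    · have := deg_le_canonConfig_of_mem_canonTop hv (hmem.2 hbv)
      rw [if_neg hbv.not_lt] at ih
      rw [if_pos (hmem.2 hbv), if_pos (by omega)]
      omega
    · rw [if_neg (mt hmem.1 hbv)]
      simp only [Nat.lt_succ_iff_lt_or_eq, hbv, or_false]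
      omega

theorem canonConfig_eq_of_le (hv : v ≠ 0) (h : ∀ l < k, F.canonTop c l = {u | b u = l})
    (hk : k ≤ b v) : F.canonConfig c k v = c v + F.degBelow b v k := by
  simpa [hk.not_gt] using canonConfig_add_ite hv h

/-- Every non-sink vertex `v` of `c` becomes unstable precisely when the level `b v - 1` topples:
not through its neighbours of lower level, but together with those of level `b v - 1`. -/
def BecomesUnstableAt (F : Ferrers n) (b c : Fin (n + 1) → ℕ) : Prop :=
  ∀ v, v ≠ 0 → c v + F.degBelow b v (b v - 1) < F.deg v ∧ F.deg v ≤ c v + F.degBelow b v (b v)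

theorem BecomesUnstableAt.stable (hc : F.BecomesUnstableAt b c) : F.Stable c :=
  fun v hv => (Nat.le_add_right _ _).trans_lt (hc v hv).1

theorem BecomesUnstableAt.mem_canonTop_succ_iff (hc : F.BecomesUnstableAt b c)
    (hb : F.IsLayering b) (h : ∀ l < k + 1, F.canonTop c l = {u | b u = l}) (hv : v ≠ 0) :
    v ∈ F.canonTop c (k + 1) ↔ b v = k + 1 := by
  obtain ⟨hlt, hle⟩ := hc v hv
  have hconfig := canonConfig_add_ite hv h
  rw [hb.mem_canonTop_succ]
  rcases lt_trichotomy (b v) (k + 1) with hk | hk | hk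
  · have := hc.stable v hv
    have := F.degBelow_le_deg (b := b) (v := v) (k + 1)
    rw [if_pos hk] at hconfig
    omega
  · rw [if_neg hk.not_lt] at hconfig
    rw [hk] at hle
    simp only [ne_eq, hv, not_false_eq_true, true_and, hk, iff_true]
    omega
  · have := F.degBelow_mono (b := b) (v := v) (show k + 1 ≤ b v - 1 by omega)
    rw [if_neg hk.not_gt] at hconfig
    omega

theorem BecomesUnstableAt.canonTop_eq (hc : F.BecomesUnstableAt b c) (hb : F.IsLayering b)
    (k : ℕ) : F.canonTop c k = {v | b v = k} := by
  induction k using Nat.strong_induction_on with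
  | _ k ih =>
    ext v
    rcases k with _ | k
    · exact (hb.eq_zero_iff v).symm
    by_cases hv : v = 0
    · refine iff_of_false (fun h => h.1 hv) fun h => ?_
      exact k.succ_ne_zero (h.symm.trans ((hb.eq_zero_iff v).2 hv))
    · exact hc.mem_canonTop_succ_iff hb ih hv

theorem IsLayering.becomesUnstableAt (hb : F.IsLayering b) (hc : F.Stable c)
    (h : ∀ k, F.canonTop c k = {v | b v = k}) : F.BecomesUnstableAt b c := by
  intro v hv
  have hconfig {k : ℕ} (hk : k ≤ b v) := canonConfig_eq_of_le hv (fun l _ => h l) hk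
  have hmem : v ∈ F.canonTop c (b v) := by rw [h]; rfl
  refine ⟨?_, (deg_le_canonConfig_of_mem_canonTop hv hmem).trans (hconfig le_rfl).le⟩
  rw [hb.degBelow_pred]
  obtain hsmall | ⟨m, hm⟩ : b v - 2 = 0 ∨ ∃ m, b v = m + 1 + 2 := by
    rcases Nat.lt_or_ge (b v) 3 with h3 | h3
    · exact Or.inl (by omega)
    · exact Or.inr ⟨b v - 3, by omega⟩
  · simpa [hsmall] using hc v hv
  · have hnot : v ∉ F.canonTop c (m + 1) := by
      rw [h, Set.mem_ofPred_eq]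
      omega
    rw [hb.mem_canonTop_succ, hconfig (by omega)] at hnot
    rw [hm, Nat.add_sub_cancel]
    by_contra! hge
    exact hnot ⟨hv, by omega, hge⟩

theorem toppleList_apply_of_notMem (hv : v ≠ 0) (l : List (Fin (n + 1))) (c : Fin (n + 1) → ℕ)
    (h : v ∉ l) : F.toppleList c l v = c v + l.countP (F.Adj · v) := by
  induction l generalizing c with
  | nil => simp [toppleList]
  | cons w l ih =>
    rw [List.mem_cons, not_or] at h
    have hstep : F.topple c w v = c v + if F.Adj w v then 1 else 0 := by
      rw [topple, if_neg hv, if_neg h.1]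
      split_ifs <;> rfl
    calc F.toppleList c (w :: l) v = F.topple c w v + l.countP (F.Adj · v) := ih _ h.2
      _ = c v + (w :: l).countP (F.Adj · v) := by
        simp only [hstep, List.countP_cons, decide_eq_true_eq]
        omega

theorem dharSeq_ofFn (σ : Equiv.Perm (Fin (n + 1))) (hσ0 : σ 0 = 0)
    (h : ∀ i, i ≠ 0 → F.deg (σ i) ≤ c (σ i) + {u | σ.symm u < i ∧ F.Adj u (σ i)}.ncard) :
    F.DharSeq c (List.ofFn σ) := by
  refine ⟨List.length_ofFn, List.nodup_ofFn.2 σ.injective, by simp [hσ0], ?_⟩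
  intro m hm hm1
  obtain ⟨i, rfl⟩ : ∃ i : Fin (n + 1), (i : ℕ) = m := ⟨⟨m, by simpa using hm⟩, rfl⟩
  have hi : i ≠ 0 := by
    rintro rfl
    exact Nat.not_succ_le_zero 0 hm1
  have hnot : σ i ∉ (List.ofFn σ).take i := by
    rw [mem_take_ofFn_equiv_iff, σ.symm_apply_apply]
    exact lt_irrefl i
  rw [List.get_ofFn, Fin.cast_mk, Fin.eta,
    toppleList_apply_of_notMem (hσ0 ▸ σ.injective.ne hi) _ c hnot]
  calc F.deg (σ i) ≤ c (σ i) + {u | σ.symm u < i ∧ F.Adj u (σ i)}.ncard := h i hi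
    _ ≤ c (σ i) + ((List.ofFn σ).take i).countP (F.Adj · (σ i)) := by
      simp only [← mem_take_ofFn_equiv_iff]
      exact Nat.add_le_add_left (ncard_le_countP _ _) _

theorem BecomesUnstableAt.exists_dharSeq (hc : F.BecomesUnstableAt b c) (hb : F.IsLayering b) :
    ∃ l, F.DharSeq c l := by
  let σ := Tuple.sort b
  have hσ : Monotone (b ∘ σ) := Tuple.monotone_sort b
  have hσ0 : σ 0 = 0 := (hb.eq_zero_iff _).1 <| Nat.le_zero.1 <|
    calc b (σ 0) ≤ b (σ (σ.symm 0)) := hσ (Fin.zero_le _)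
      _ = 0 := by rw [σ.apply_symm_apply, (hb.eq_zero_iff 0).2 rfl]
  refine ⟨List.ofFn σ, dharSeq_ofFn σ hσ0 fun i hi => ?_⟩
  refine (hc _ (hσ0 ▸ σ.injective.ne hi)).2.trans (Nat.add_le_add_left ?_ _)
  refine Set.ncard_le_ncard fun u hu => ⟨hσ.reflect_lt ?_, hu.1⟩
  simpa using hu.2

theorem IsLayering.recurrent_and_canonTop_eq_iff (hb : F.IsLayering b) (h0 : c 0 = 0) :
    (F.Recurrent c ∧ ∀ k, F.canonTop c k = {v | b v = k}) ↔ F.BecomesUnstableAt b c :=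
  ⟨fun ⟨hrec, h⟩ => hb.becomesUnstableAt hrec.2.1 h,
    fun hc => ⟨⟨h0, hc.stable, hc.exists_dharSeq hb⟩, hc.canonTop_eq hb⟩⟩

end CanonicalToppling

section Orientation

variable {F : Ferrers n} {T : Fin (n + 1) → Fin (n + 1) → Bool} {i j k u v : Fin (n + 1)}

/-- The orientation of `G(F)` encoded by a tableau `T`: row to column across a `1`, column to row
across a `0`. -/
def Arc (F : Ferrers n) (T : Fin (n + 1) → Fin (n + 1) → Bool) (u v : Fin (n + 1)) : Prop :=
  (F.Cell u v ∧ T u v = true) ∨ (F.Cell v u ∧ T v u = false)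

theorem Arc.adj (h : F.Arc T u v) : F.Adj u v := h.imp And.left And.left

theorem arc_iff_of_mem_rows (hu : u ∈ F.rows) : F.Arc T u v ↔ F.Cell u v ∧ T u v = true :=
  or_iff_left fun h => h.1.2.1 hu

theorem arc_iff_of_notMem_rows (hu : u ∉ F.rows) : F.Arc T u v ↔ F.Cell v u ∧ T v u = false :=
  or_iff_right fun h => hu h.1.1

theorem arc_iff_of_mem_rows_right (hv : v ∈ F.rows) :
    F.Arc T u v ↔ F.Cell v u ∧ T v u = false :=
  or_iff_right fun h => h.1.2.1 hv

theorem arc_iff_of_notMem_rows_right (hv : v ∉ F.rows) :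
    F.Arc T u v ↔ F.Cell u v ∧ T u v = true :=
  or_iff_left fun h => hv h.1.1

theorem Adj.arc_symm_iff (h : F.Adj u v) : F.Arc T v u ↔ ¬F.Arc T u v := by
  rcases h with h | h
  · simp [arc_iff_of_mem_rows h.1, arc_iff_of_notMem_rows h.2.1, h]
  · simp [arc_iff_of_mem_rows h.1, arc_iff_of_notMem_rows h.2.1, h]

theorem IsEW.not_arc_zero (hT : F.IsEW T) (u : Fin (n + 1)) : ¬F.Arc T u 0 := by
  rintro (⟨h, -⟩ | ⟨h, h0⟩)
  · exact h.2.1 F.zero_mem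
  · simp [hT.2.1 u h] at h0

theorem IsEW.exists_arc (hT : F.IsEW T) (hv : v ≠ 0) : ∃ u, F.Arc T u v := by
  by_cases h : v ∈ F.rows
  · obtain ⟨j, hj, h0⟩ := hT.2.2.1 v h hv
    exact ⟨j, Or.inr ⟨hj, h0⟩⟩
  · have hc : F.Cell 0 v := ⟨F.zero_mem, h, Fin.pos_of_ne_zero hv⟩
    exact ⟨0, Or.inl ⟨hc, hT.2.1 v hc⟩⟩

theorem IsEW.arc_shortcut (hT : F.IsEW T) {i' : Fin (n + 1)} (hi : i ∈ F.rows) (hle : i' ≤ i)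
    (hi'j : F.Arc T i' j) (hji : F.Arc T j i) (hik : F.Arc T i k) : F.Arc T i' k := by
  have hj : j ∉ F.rows := hji.adj.symm.mem_rows_iff.1 hi
  have hi' : i' ∈ F.rows := hi'j.adj.mem_rows_iff.2 hj
  rw [arc_iff_of_mem_rows hi'] at hi'j ⊢
  rw [arc_iff_of_notMem_rows hj] at hji
  rw [arc_iff_of_mem_rows hi] at hik
  have hcell : F.Cell i' k := ⟨hi', hik.1.2.1, hle.trans_lt hik.1.2.2⟩
  refine ⟨hcell, ?_⟩
  by_contra hf
  have hrect := hT.2.2.2 i i' j k hji.1 hik.1 hi'j.1 hcell (by simp [hji.2, hf])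
    (hik.2.trans hi'j.2.symm)
  simp [hji.2, hik.2] at hrect

theorem exists_mem_rows_of_forall_exists_arc {Y : Finset (Fin (n + 1))} (hne : Y.Nonempty)
    (hY : ∀ v ∈ Y, ∃ u ∈ Y, F.Arc T u v) : ∃ i ∈ Y, i ∈ F.rows := by
  obtain ⟨v, hv⟩ := hne
  obtain ⟨u, hu, huv⟩ := hY v hv
  by_cases hrow : v ∈ F.rows
  · exact ⟨v, hv, hrow⟩
  · exact ⟨u, hu, huv.adj.mem_rows_iff.2 hrow⟩

-- A largest row `i` of `Y` can be deleted: some row of `Y` above it has all out-arcs of `i`.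
theorem IsEW.not_forall_exists_arc (hT : F.IsEW T) {Y : Finset (Fin (n + 1))}
    (hne : Y.Nonempty) : ¬∀ v ∈ Y, ∃ u ∈ Y, F.Arc T u v := by
  induction Y using Finset.strongInduction with
  | _ Y ih =>
    intro hY
    obtain ⟨i, hi, hmax⟩ := (Y ∩ F.rows).exists_max_image id <| by
      simpa [Finset.Nonempty] using exists_mem_rows_of_forall_exists_arc hne hY
    obtain ⟨hiY, hir⟩ := Finset.mem_inter.1 hi
    obtain ⟨j, hj, hji⟩ := hY i hiY
    obtain ⟨i', hi', hi'j⟩ := hY j hj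
    have hle : i' ≤ i := hmax i' <| Finset.mem_inter.2
      ⟨hi', hi'j.adj.mem_rows_iff.2 (hji.adj.symm.mem_rows_iff.1 hir)⟩
    have hi'i : i' ≠ i := by
      rintro rfl
      exact hji.adj.arc_symm_iff.1 hi'j hji
    have hi'erase : i' ∈ Y.erase i := Finset.mem_erase.2 ⟨hi'i, hi'⟩
    refine ih (Y.erase i) (Finset.erase_ssubset hiY) ⟨i', hi'erase⟩ fun v hv => ?_
    obtain ⟨u, hu, huv⟩ := hY v (Finset.mem_of_mem_erase hv)
    by_cases hui : u = i
    · exact ⟨i', hi'erase, hT.arc_shortcut hir hle hi'j hji (hui ▸ huv)⟩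
    · exact ⟨u, Finset.mem_erase.2 ⟨hui, hu⟩, huv⟩

theorem IsEW.wellFounded_arc (hT : F.IsEW T) : WellFounded (F.Arc T) := by
  rw [WellFounded.wellFounded_iff_has_min]
  intro s hs
  by_contra! h
  exact hT.not_forall_exists_arc (Y := s.toFinset) (by simpa using hs) (by simpa using h)

theorem phiTC_eq_ncard_arc (hv : v ≠ 0) : F.phiTC T v = {u | F.Arc T v u}.ncard := by
  rw [phiTC, if_neg hv]
  split_ifs with h
  · simp only [arc_iff_of_mem_rows h]
  · simp only [arc_iff_of_notMem_rows h]

end Orientation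

section LongestPaths

variable {F : Ferrers n} {T : Fin (n + 1) → Fin (n + 1) → Bool} {b : Fin (n + 1) → ℕ}
  {i j u v : Fin (n + 1)}

theorem IsEW.isLayering (hT : F.IsEW T) (hb : IsLongestPathLength (F.Arc T) b) :
    F.IsLayering b := by
  have hzero (v : Fin (n + 1)) : b v = 0 ↔ v = 0 := by
    refine ⟨fun h => ?_, ?_⟩
    · by_contra hv
      obtain ⟨u, hu⟩ := hT.exists_arc hv
      exact (hb.lt hu).ne_bot h
    · rintro rfl
      by_contra h
      obtain ⟨u, hu, -⟩ := hb.exists_pred h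
      exact hT.not_arc_zero u hu
  refine ⟨fun v => ?_, hzero⟩
  induction v using hT.wellFounded_arc.induction with
  | _ v ih =>
    by_cases hv : b v = 0
    · exact iff_of_true (hv ▸ Even.zero) ((hzero v).1 hv ▸ F.zero_mem)
    · obtain ⟨u, hu, hbu⟩ := hb.exists_pred hv
      rw [hbu, Nat.even_add_one, ih u hu, hu.adj.mem_rows_iff, not_not]

theorem arc_iff_adj_and_lt (hb : IsLongestPathLength (F.Arc T) b) :
    F.Arc T u v ↔ F.Adj u v ∧ b u < b v := by
  refine ⟨fun h => ⟨h.adj, hb.lt h⟩, fun ⟨hadj, hlt⟩ => ?_⟩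
  by_contra h
  exact hlt.not_gt (hb.lt (hadj.arc_symm_iff.2 h))

theorem phiTC_add_degBelow (hb : IsLongestPathLength (F.Arc T) b) (hv : v ≠ 0) :
    F.phiTC T v + F.degBelow b v (b v) = F.deg v := by
  simp only [phiTC_eq_ncard_arc hv, degBelow, deg, ← arc_iff_adj_and_lt hb]
  rw [← Set.ncard_union_eq (Set.disjoint_left.2 fun u hvu huv => hvu.adj.arc_symm_iff.1 huv hvu)]
  congr 1
  ext u
  refine ⟨fun h => h.elim Arc.adj fun h => h.adj.symm, fun h => ?_⟩
  exact (Classical.em (F.Arc T v u)).imp id h.arc_symm_iff.2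

theorem IsEW.becomesUnstableAt_phiTC (hT : F.IsEW T) (hb : IsLongestPathLength (F.Arc T) b) :
    F.BecomesUnstableAt b (F.phiTC T) := by
  intro v hv
  have hdeg := phiTC_add_degBelow hb hv
  refine ⟨?_, hdeg.ge⟩
  obtain ⟨u, hu, hbu⟩ := hb.exists_pred (mt ((hT.isLayering hb).eq_zero_iff v).1 hv)
  have hpos : 0 < {w | F.Adj w v ∧ b w = b u}.ncard := (Set.ncard_pos).2 ⟨u, hu.adj, rfl⟩
  rw [← hdeg, hbu, Nat.add_sub_cancel, degBelow_succ]
  omega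

theorem IsEW.canonTop_phiTC (hT : F.IsEW T) (hb : IsLongestPathLength (F.Arc T) b) (k : ℕ) :
    F.canonTop (F.phiTC T) k = {v | b v = k} :=
  (hT.becomesUnstableAt_phiTC hb).canonTop_eq (hT.isLayering hb) k

theorem IsEW.suppS_eq (hT : F.IsEW T) (hb : IsLongestPathLength (F.Arc T) b)
    (i j : Fin (n + 1)) : F.suppS T i j = decide (b i < b j) := by
  simp [suppS, bIdx, hT.canonTop_phiTC hb]

theorem IsEW.exists_arc_arc_of_succ_lt (hT : F.IsEW T) (hb : IsLongestPathLength (F.Arc T) b)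
    (h : F.Adj u v) (hlt : b u + 1 < b v) :
    ∃ w w', F.Arc T w w' ∧ F.Arc T w' v ∧ b u < b w ∧ b w < b w' ∧ b w' < b v := by
  obtain ⟨w', hw'v, hbw'⟩ := hb.exists_pred (show b v ≠ 0 by omega)
  obtain ⟨w, hww', hbw⟩ := hb.exists_pred (show b w' ≠ 0 by omega)
  have := (hT.isLayering hb).mod_two_ne h
  exact ⟨w, w', hww', hw'v, by omega, hb.lt hww', hb.lt hw'v⟩

theorem IsEW.cornersupport_iff_of_arc_col (hT : F.IsEW T)
    (hb : IsLongestPathLength (F.Arc T) b) (hi : i ∈ F.rows) (h : F.Arc T i j) :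
    F.Cornersupport T i j ↔ b i + 1 < b j := by
  simp only [Cornersupport, hT.suppS_eq hb, ((arc_iff_of_mem_rows hi).1 h).2, Bool.not_true,
    decide_eq_false_iff_not, decide_eq_true_eq, not_lt]
  constructor
  · rintro ⟨i', j', -, -, -, -, hj'i', hi'j, hij'⟩
    omega
  · intro hlt
    obtain ⟨w, w', hww', hw'j, hiw, hlt', hltj⟩ := hT.exists_arc_arc_of_succ_lt hb h.adj hlt
    have hw' : w' ∈ F.rows := hw'j.adj.mem_rows_iff.2 (h.adj.mem_rows_iff.1 hi)
    exact ⟨w', w, hw', hww'.adj.symm.mem_rows_iff.1 hw', by rintro rfl; omega,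
      by rintro rfl; omega, hlt'.le, hltj, hiw⟩

theorem IsEW.cornersupport_iff_of_arc_row (hT : F.IsEW T)
    (hb : IsLongestPathLength (F.Arc T) b) (hi : i ∈ F.rows) (h : F.Arc T j i) :
    F.Cornersupport T i j ↔ b j + 1 < b i := by
  have hj : j ∉ F.rows := h.adj.symm.mem_rows_iff.1 hi
  simp only [Cornersupport, hT.suppS_eq hb, ((arc_iff_of_mem_rows_right hi).1 h).2, Bool.not_false,
    decide_eq_false_iff_not, decide_eq_true_eq, not_lt]
  constructor
  · rintro ⟨i', j', hi', -, -, -, hi'j', hji', hj'i⟩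
    have hne : b j ≠ b i' := fun heq => hj <| by
      rwa [← (hT.isLayering hb).even_iff, heq, (hT.isLayering hb).even_iff]
    omega
  · intro hlt
    obtain ⟨w, w', hww', hw'i, hjw, hlt', hlti⟩ := hT.exists_arc_arc_of_succ_lt hb h.adj hlt
    have hw' : w' ∉ F.rows := hw'i.adj.symm.mem_rows_iff.1 hi
    exact ⟨w, w', hww'.adj.mem_rows_iff.2 hw', hw', by rintro rfl; omega,
      by rintro rfl; omega, hlt', hjw.le, hlti.le⟩

theorem IsEW.nu_eq_ncard (hT : F.IsEW T) (hb : IsLongestPathLength (F.Arc T) b)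
    (v : Fin (n + 1)) : F.nu T v = {u | F.Arc T u v ∧ ¬b u + 1 < b v}.ncard := by
  rw [nu]
  split_ifs with hv <;> congr 1 <;> ext u
  · rw [Set.mem_ofPred_eq, ← and_assoc, ← arc_iff_of_mem_rows_right hv]
    exact and_congr_right fun h => not_congr (hT.cornersupport_iff_of_arc_row hb hv h)
  · rw [Set.mem_ofPred_eq, ← and_assoc, ← arc_iff_of_notMem_rows_right hv]
    exact and_congr_right fun h => not_congr <|
      hT.cornersupport_iff_of_arc_col hb (h.adj.mem_rows_iff.2 hv) h

theorem IsEW.degBelow_eq_add_nu (hT : F.IsEW T) (hb : IsLongestPathLength (F.Arc T) b)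
    (hv : v ≠ 0) : F.degBelow b v (b v) = F.degBelow b v (b v - 1) + F.nu T v := by
  obtain ⟨m, hm⟩ := Nat.exists_eq_succ_of_ne_zero (mt ((hT.isLayering hb).eq_zero_iff v).1 hv)
  rw [hT.nu_eq_ncard hb, hm, Nat.succ_eq_add_one, degBelow_succ, Nat.add_sub_cancel]
  congr 2
  ext u
  rw [Set.mem_ofPred_eq, Set.mem_ofPred_eq, arc_iff_adj_and_lt hb, and_assoc]
  exact and_congr_right fun _ => by omega

end LongestPaths

end Ferrers

/-- Let `T` be a EW-tableau on `F`, `c̃ = φ_TC T`, and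
`c = c̃ + a`.  Then `c` is recurrent with the same canonical toppling as `c̃`
if and only if `a_j < ν_j(T)` for every non-sink vertex `j`. -/
theorem add_decoration_recurrent_iff {n : ℕ} (F : Ferrers n)
    (T : Fin (n + 1) → Fin (n + 1) → Bool) (hT : F.IsEW T)
    (a : Fin (n + 1) → ℕ) (ha0 : a 0 = 0) :
    (F.Recurrent (fun v => F.phiTC T v + a v) ∧
      ∀ k, F.canonTop (fun v => F.phiTC T v + a v) k = F.canonTop (F.phiTC T) k) ↔
    (∀ j : Fin (n + 1), j ≠ 0 → a j < F.nu T j) := by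
  obtain ⟨b, hb⟩ := exists_isLongestPathLength hT.wellFounded_arc
  simp only [hT.canonTop_phiTC hb]
  rw [(hT.isLayering hb).recurrent_and_canonTop_eq_iff (by simp [Ferrers.phiTC, ha0])]
  refine forall₂_congr fun v hv => ?_
  have hdeg := Ferrers.phiTC_add_degBelow hb hv
  have hnu := hT.degBelow_eq_add_nu hb hv
  dsimp only
  omega
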